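/- Under the construction setup with assumptions (I)–(VI): if γ ∈ [0,1] is an agent whose opinion satisfies x(γ) = x(max A) + 1 (i.e. x(γ) equals the maximum of x(A) plus one), then the updated opinion satisfies y(γ) ≥ ε + d. -/

import Mathlib

open MeasureTheory Set

/-- The neighbourhood set `N_x(α) = {β ∈ [0,1] : |x(β) − x(α)| ≤ 1}`. -/
def hkNbhd (x : ℝ → ℝ) (α : ℝ) : Set ℝ :=
  {β | β ∈ Icc (0:ℝ) 1 ∧ |x β - x α| ≤ 1}

/-- The continuous-agent Hegselmann–Krause update
`Tx(α) = (∫_{N_x(α)} x dμ) / μ(N_x(α))`. -/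
noncomputable def hkT (x : ℝ → ℝ) : ℝ → ℝ :=
  fun α => (∫ β in hkNbhd x α, x β) / (volume (hkNbhd x α)).toReal

/-- A function `x : [0,1] → ℝ` is regular if it is continuous, nondecreasing,
differentiable outside a set of measure zero, and there are constants
`0 < m ≤ M` with `m ≤ x′ ≤ M` wherever the derivative exists. -/
def Regular (x : ℝ → ℝ) : Prop :=
  ContinuousOn x (Icc 0 1) ∧ MonotoneOn x (Icc 0 1) ∧
  ∃ m M : ℝ, 0 < m ∧ m ≤ M ∧
    (∀ᵐ α ∂(volume.restrict (Icc (0:ℝ) 1)), DifferentiableAt ℝ x α) ∧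
    ∀ α ∈ Icc (0:ℝ) 1, DifferentiableAt ℝ x α → m ≤ deriv x α ∧ deriv x α ≤ M

/-!
Since `x` is strictly increasing, an agent whose opinion is `x a + 1` sees nobody to the left of
`a`. It does see `[a, b]`, a short interval on which opinions may fall below the target `w`, and a
much longer interval `(p, q)` on which opinions exceed `w` by a fixed amount. All its other
neighbours lie to the right of `b` and are at least at `w`, so its mean opinion is at least `w`.
In the construction, `w = d + ε`, `[a, b]` is the interval `B` and `(p, q)` is the right half of
`C`; antisymmetry bounds the opinions there by `d + 2ε ≤ 2`, so they are in sight.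
-/

theorem le_setAverage_of_deficit_le_excess {X : Type*} [MeasurableSpace X] {μ : Measure X}
    {f : X → ℝ} {s t u : Set X} {c η δ : ℝ} (hs : MeasurableSet s) (ht : MeasurableSet t)
    (hu : MeasurableSet u) (hts : t ⊆ s) (hus : u ⊆ s) (htu : Disjoint t u) (hμ₀ : μ s ≠ 0)
    (hμ : μ s ≠ ⊤) (hf : IntegrableOn f s μ) (hft : ∀ i ∈ t, c - η ≤ f i)
    (hfu : ∀ i ∈ u, c + δ ≤ f i) (hfc : ∀ i ∈ s \ (t ∪ u), c ≤ f i)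
    (hbalance : η * μ.real t ≤ δ * μ.real u) :
    c ≤ ⨍ i in s, f i ∂μ := by
  have integral_ge {v : Set X} {k : ℝ} (hv : MeasurableSet v) (hvs : v ⊆ s)
      (hk : ∀ i ∈ v, k ≤ f i) : k * μ.real v ≤ ∫ i in v, f i ∂μ :=
    setIntegral_ge_of_const_le_real hv (measure_ne_top_of_subset hvs hμ) hk (hf.mono_set hvs)
  have htus : t ∪ u ⊆ s := union_subset hts hus
  have hintegral : ∫ i in s, f i ∂μ =
      ∫ i in t, f i ∂μ + ∫ i in u, f i ∂μ + ∫ i in s \ (t ∪ u), f i ∂μ := by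
    rw [← setIntegral_union htu hu (hf.mono_set hts) (hf.mono_set hus),
      setIntegral_sdiff (ht.union hu) hf htus]
    ring
  have hmeasure : μ.real s = μ.real t + μ.real u + μ.real (s \ (t ∪ u)) := by
    rw [← measureReal_union htu hu (measure_ne_top_of_subset hts hμ)
      (measure_ne_top_of_subset hus hμ), measureReal_sdiff htus (ht.union hu) hμ]
    ring
  have hpos : 0 < μ.real s := ENNReal.toReal_pos hμ₀ hμ
  rw [setAverage_eq, smul_eq_mul, le_inv_mul_iff₀ hpos, hintegral, hmeasure]
  linarith [integral_ge ht hts hft, integral_ge hu hus hfu,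
    integral_ge (hs.diff (ht.union hu)) sdiff_subset hfc]

theorem strictMonoOn_of_monotoneOn_of_deriv_ne_zero {f : ℝ → ℝ} {s : Set ℝ} [s.OrdConnected]
    (hf : MonotoneOn f s)
    (hderiv : ∀ t ∈ interior s, DifferentiableAt ℝ f t → deriv f t ≠ 0) :
    StrictMonoOn f s := by
  intro a ha b hb hab
  refine (hf ha hb hab.le).lt_of_ne fun heq => ?_
  obtain ⟨t, ht⟩ := nonempty_Ioo.2 hab
  have hconst : f =ᶠ[nhds t] fun _ => f a := by
    filter_upwards [Ioo_mem_nhds ht.1 ht.2] with r hr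
    have hrs : r ∈ s := s.Icc_subset ha hb (Ioo_subset_Icc_self hr)
    exact le_antisymm ((hf hrs hb hr.2.le).trans_eq heq.symm) (hf ha hrs hr.1.le)
  have hderiv_zero : HasDerivAt f 0 t := (hasDerivAt_const t (f a)).congr_of_eventuallyEq hconst
  have ht_interior : t ∈ interior s :=
    interior_maximal (Ioo_subset_Icc_self.trans (s.Icc_subset ha hb)) isOpen_Ioo ht
  exact hderiv t ht_interior hderiv_zero.differentiableAt hderiv_zero.deriv

theorem strictMonoOn_of_regular {x : ℝ → ℝ} (hx : Regular x) : StrictMonoOn x (Icc 0 1) := by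
  obtain ⟨-, hmono, m, _, hm, -, -, hderiv⟩ := hx
  exact strictMonoOn_of_monotoneOn_of_deriv_ne_zero hmono fun t ht hdiff =>
    (hm.trans_le (hderiv t (interior_subset ht) hdiff).1).ne'

theorem le_left_of_forall_ne {α β : Type*} [ConditionallyCompleteLinearOrder α]
    [TopologicalSpace α] [OrderTopology α] [DenselyOrdered α] [LinearOrder β]
    [TopologicalSpace β] [OrderClosedTopology β] {f : α → β} {b c : α} {w : β} (hbc : b ≤ c)
    (hf : ContinuousOn f (Icc b c)) (hwc : w ≤ f c) (hw : ∀ t ∈ Ioc b c, f t ≠ w) :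
    w ≤ f b := by
  by_contra! hlt
  obtain ⟨t, ht, rfl⟩ := intermediate_value_Icc hbc hf ⟨hlt.le, hwc⟩
  have hbt : b ≠ t := fun h => hlt.ne (congrArg f h)
  exact hw t ⟨ht.1.lt_of_ne hbt, ht.2⟩ rfl

section HKUpdate

variable {x : ℝ → ℝ} {α a b q γ : ℝ}

theorem hkT_eq_setAverage (x : ℝ → ℝ) (α : ℝ) : hkT x α = ⨍ β in hkNbhd x α, x β := by
  rw [setAverage_eq, smul_eq_mul, hkT, div_eq_inv_mul, measureReal_def]

theorem hkNbhd_subset_Icc : hkNbhd x α ⊆ Icc 0 1 := fun _ hβ => hβ.1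

theorem hkNbhd_eq_inter_preimage (x : ℝ → ℝ) (α : ℝ) :
    hkNbhd x α = Icc 0 1 ∩ x ⁻¹' Icc (x α - 1) (x α + 1) := by
  rw [← Real.closedBall_eq_Icc]
  rfl

theorem hkNbhd_eq_of_eq_add_one (hγ : x γ = x a + 1) :
    hkNbhd x γ = Icc 0 1 ∩ x ⁻¹' Icc (x a) (x a + 2) := by
  rw [hkNbhd_eq_inter_preimage, hγ, add_sub_cancel_right, add_assoc, one_add_one_eq_two]

theorem volume_hkNbhd_ne_top : volume (hkNbhd x α) ≠ ⊤ :=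
  measure_ne_top_of_subset hkNbhd_subset_Icc measure_Icc_lt_top.ne

theorem measurableSet_hkNbhd (hx : MonotoneOn x (Icc 0 1)) : MeasurableSet (hkNbhd x α) := by
  rw [hkNbhd_eq_inter_preimage]
  obtain ⟨u, hu, hpreimage⟩ :=
    ordConnected_Icc.preimage_monotoneOn (s := Icc (x α - 1) (x α + 1)) hx
  rw [hpreimage]
  exact measurableSet_Icc.inter hu.measurableSet

theorem integrableOn_hkNbhd (hx : MonotoneOn x (Icc 0 1)) : IntegrableOn x (hkNbhd x α) :=
  (hx.integrableOn_isCompact isCompact_Icc).mono_set hkNbhd_subset_Icc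

theorem hkNbhd_subset_Ici (hx : StrictMonoOn x (Icc 0 1)) (ha : a ∈ Icc 0 1)
    (hγ : x γ = x a + 1) : hkNbhd x γ ⊆ Ici a := by
  rw [hkNbhd_eq_of_eq_add_one hγ]
  exact fun β hβ => (hx.le_iff_le ha hβ.1).1 hβ.2.1

theorem Icc_subset_hkNbhd (hx : MonotoneOn x (Icc 0 1)) (ha : 0 ≤ a) (hq : q ≤ 1)
    (hxq : x q ≤ x a + 2) (hγ : x γ = x a + 1) : Icc a q ⊆ hkNbhd x γ := by
  rw [hkNbhd_eq_of_eq_add_one hγ]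
  intro β hβ
  have haq : a ≤ q := hβ.1.trans hβ.2
  have hβI : β ∈ Icc 0 1 := ⟨ha.trans hβ.1, hβ.2.trans hq⟩
  exact ⟨hβI, hx ⟨ha, haq.trans hq⟩ hβI hβ.1, (hx hβI ⟨ha.trans haq, hq⟩ hβ.2).trans hxq⟩

theorem le_hkT_of_eq_add_one {p w δ : ℝ} (hx : StrictMonoOn x (Icc 0 1)) (ha : 0 ≤ a)
    (hab : a ≤ b) (hbp : b ≤ p) (hpq : p < q) (hq : q ≤ 1) (hxb : w ≤ x b)
    (hxp : w + δ ≤ x p) (hxq : x q ≤ x a + 2)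
    (hbalance : (w - x a) * (b - a) ≤ δ * (q - p)) (hγ : x γ = x a + 1) :
    w ≤ hkT x γ := by
  have mem_unit {β : ℝ} (haβ : a ≤ β) (hβq : β ≤ q) : β ∈ Icc (0 : ℝ) 1 :=
    ⟨ha.trans haβ, hβq.trans hq⟩
  have haI := mem_unit le_rfl (by linarith)
  have hbI := mem_unit hab (by linarith)
  have hpI := mem_unit (hab.trans hbp) hpq.le
  have hN : Icc a q ⊆ hkNbhd x γ := Icc_subset_hkNbhd hx.monotoneOn ha hq hxq hγ
  have hIcc : Icc a b ⊆ hkNbhd x γ := (Icc_subset_Icc_right (hbp.trans hpq.le)).trans hN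
  have hIoo : Ioo p q ⊆ hkNbhd x γ :=
    Ioo_subset_Icc_self.trans ((Icc_subset_Icc_left (hab.trans hbp)).trans hN)
  rw [hkT_eq_setAverage]
  refine le_setAverage_of_deficit_le_excess (t := Icc a b) (u := Ioo p q) (η := w - x a) (δ := δ)
    (measurableSet_hkNbhd hx.monotoneOn) measurableSet_Icc measurableSet_Ioo hIcc hIoo ?disjoint
    ?nonnull volume_hkNbhd_ne_top (integrableOn_hkNbhd hx.monotoneOn) ?deficit ?excess ?rest
    ?balance
  case disjoint =>
    exact disjoint_left.2 fun β hβ hβ' => (hβ.2.trans hbp).not_gt hβ'.1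
  case nonnull =>
    exact (measure_pos_of_superset hIoo ((Measure.measure_Ioo_pos volume).2 hpq).ne').ne'
  case deficit =>
    intro β hβ
    simpa only [sub_sub_cancel] using hx.monotoneOn haI (hIcc hβ).1 hβ.1
  case excess => exact fun β hβ => hxp.trans (hx.monotoneOn hpI (hIoo hβ).1 hβ.1.le)
  case rest =>
    intro β ⟨hβ, hβ'⟩
    have haβ : a ≤ β := hkNbhd_subset_Ici hx haI hγ hβ
    have hbβ : b ≤ β := le_of_not_ge fun h => hβ' (Or.inl ⟨haβ, h⟩)
    exact hxb.trans (hx.monotoneOn hbI hβ.1 hbβ)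
  case balance => rwa [Real.volume_real_Icc_of_le hab, Real.volume_real_Ioo_of_le hpq.le]

end HKUpdate

theorem hk_gamma_escapes_right_general {x : ℝ → ℝ} {ε d a b γ : ℝ} (hε : 0 < ε)
    (hd₀ : 0 ≤ d + ε) (hd₂ : d + 2 * ε ≤ 2) (hεd : ε * (d + ε) ≤ 1 / 4) (ha : 0 ≤ a)
    (hab : a ≤ b) (hb : b < 1 / 2) (hlen : b - a ≤ ε ^ 2 * (1 - 2 * b))
    (hcont : ContinuousOn x (Icc 0 1)) (hmono : StrictMonoOn x (Icc 0 1)) (hxa : 0 ≤ x a)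
    (hsym : ∀ s ∈ Icc (0 : ℝ) (1 / 2), x (1 / 2 + s) + x (1 / 2 - s) = 2 * x (1 / 2))
    (hmid : x (1 / 2) = d + 3 * ε / 2) (hlevel : ∀ α ∈ Icc 0 1, x α = d + ε → α ≤ b)
    (hγ : x γ = x a + 1) :
    d + ε ≤ hkT x γ := by
  have hb₀ : 0 ≤ b := ha.trans hab
  have hhalf : Icc b (1 / 2) ⊆ Icc 0 1 := Icc_subset_Icc hb₀ (by norm_num)
  have hxb : d + ε ≤ x b :=
    le_left_of_forall_ne hb.le (hcont.mono hhalf) (by linarith)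
      fun α hα hxα => hα.1.not_ge (hlevel α (hhalf (Ioc_subset_Icc_self hα)) hxα)
  have hreflect : x (1 - b) + x b = 2 * x (1 / 2) := by
    have hpair := hsym (1 / 2 - b) ⟨by linarith, by linarith⟩
    rwa [sub_sub_cancel, ← add_sub_assoc, add_halves] at hpair
  have hbalance : (d + ε - x a) * (b - a) ≤ ε / 2 * (1 - b - 1 / 2) :=
    calc (d + ε - x a) * (b - a) ≤ (d + ε) * (b - a) := by gcongr; linarith
      _ ≤ (d + ε) * (ε ^ 2 * (1 - 2 * b)) := by gcongr
      _ = ε * (d + ε) * (ε * (1 - 2 * b)) := by ring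
      _ ≤ 1 / 4 * (ε * (1 - 2 * b)) := by gcongr; exact mul_nonneg hε.le (by linarith)
      _ = ε / 2 * (1 - b - 1 / 2) := by ring
  exact le_hkT_of_eq_add_one hmono ha hab hb.le (by linarith) (by linarith) hxb (by linarith)
    (by linarith) hbalance hγ

theorem lt_half_and_length_eq_of_partition {ε a₁ a₂ a₃ a₄ : ℝ} (hε : ε ≠ 0) (h₀₁ : 0 ≤ a₁)
    (hlenB : a₂ - a₁ = ε ^ 2 * (a₃ - a₂)) (hlenD : a₄ - a₃ = ε ^ 2 * (a₃ - a₂))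
    (hlenC : a₃ - a₂ = ε ^ 2 * a₁) (hlenE : 1 - a₄ = a₁) :
    a₂ < 1 / 2 ∧ a₂ - a₁ = ε ^ 2 * (1 - 2 * a₂) := by
  have ha₃ : a₃ = 1 - a₂ := by linarith
  have ha₁ : 0 < a₁ := by
    refine h₀₁.lt_of_ne fun h => ?_
    subst h
    rw [hlenC] at hlenB
    linarith
  have hC : 0 < a₃ - a₂ := hlenC ▸ by positivity
  exact ⟨by linarith, by rw [hlenB, ha₃]; ring⟩

/-- The agent `γ` whose opinion is the maximum of `x(A)` plus one gets updated
opinion at least `ε + d` (so it leaves `ℬ` on the right). -/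
theorem hk_gamma_escapes_right
    -- the confidence/width parameter ε and the fixed constant d = 3/2
    (ε d : ℝ) (hε : 0 < ε) (hε' : ε ≤ 1/10) (hd : d = 3/2)
    -- partition of [0,1] into consecutive closed intervals A, B, C, D, E
    (a₁ a₂ a₃ a₄ : ℝ)
    (h₀₁ : 0 ≤ a₁) (h₁₂ : a₁ ≤ a₂) (h₂₃ : a₂ ≤ a₃) (h₃₄ : a₃ ≤ a₄) (h₄₅ : a₄ ≤ 1)
    (A B C D E : Set ℝ)
    (hA : A = Icc 0 a₁) (hB : B = Icc a₁ a₂) (hC : C = Icc a₂ a₃)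
    (hD : D = Icc a₃ a₄) (hE : E = Icc a₄ 1)
    -- |B| = |D| = ε²|C|, |C| = ε²|A| = ε²|E| (symmetric about 1/2)
    (hlenB : a₂ - a₁ = ε^2 * (a₃ - a₂))
    (hlenD : a₄ - a₃ = ε^2 * (a₃ - a₂))
    (hlenC : a₃ - a₂ = ε^2 * a₁)
    (hlenE : 1 - a₄ = a₁)
    -- the opinion function x : regular, nonnegative, anti-symmetric about 1/2
    (x : ℝ → ℝ) (hreg : Regular x)
    (hnonneg : ∀ α ∈ Icc (0:ℝ) 1, 0 ≤ x α)
    (hsym : ∀ s ∈ Icc (0:ℝ) (1/2), x (1/2 + s) + x (1/2 - s) = 2 * x (1/2))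
    (hmid : x (1/2) = d + 3*ε/2)
    -- the sets A_x = x⁻¹([0,2ε]), B_x = x⁻¹([2ε, d+ε]) and the mean Ā on A_x
    (Ax Bx : Set ℝ) (Abar : ℝ)
    (hAx : Ax = {α ∈ Icc (0:ℝ) 1 | x α ∈ Icc 0 (2*ε)})
    (hBx : Bx = {α ∈ Icc (0:ℝ) 1 | x α ∈ Icc (2*ε) (d + ε)})
    (hAbar : Abar = (∫ α in Ax, x α) / (volume Ax).toReal)
    -- derivative bounds e, s > 0
    (e s : ℝ) (he : 0 < e) (hs : 0 < s)
    -- Assumptions (I)–(VI)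
    (hI : A ⊆ Ax)
    (hII : Bx ⊆ B)
    (hIII : x '' A ⊆ Icc 0 ε)
    (hIV : ∀ α ∈ A, DifferentiableAt ℝ x α → deriv x α ≤ e)
    (hV : ∀ α ∈ Bx, DifferentiableAt ℝ x α → s ≤ deriv x α)
    (hVI : ε - Abar > 2*ε^2)
    -- the updated opinion function y = Tx
    (y : ℝ → ℝ) (hy : y = hkT x)
    (γ : ℝ) (hγ : γ ∈ Icc (0:ℝ) 1) (hγx : x γ = x a₁ + 1) :
    y γ ≥ ε + d := by
  obtain ⟨hhalf, hlen⟩ := lt_half_and_length_eq_of_partition hε.ne' h₀₁ hlenB hlenD hlenC hlenE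
  have hlevel : ∀ α ∈ Icc 0 1, x α = d + ε → α ≤ a₂ := fun α hα hxα =>
    (hB ▸ hII (hBx ▸ ⟨hα, by linarith, hxα.le⟩) : α ∈ Icc a₁ a₂).2
  rw [hy, add_comm ε d]
  exact hk_gamma_escapes_right_general hε (by linarith) (by linarith) (by nlinarith) h₀₁ h₁₂ hhalf
    hlen.le hreg.1 (strictMonoOn_of_regular hreg) (hnonneg a₁ ⟨h₀₁, by linarith⟩) hsym hmid hlevel
    hγx
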